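/- Let Φ = (a; b) and Ψ = (c; d) be 𝓛-Lagrangian frames (so a, b, c, d are invertible and a·b⁻¹, c·d⁻¹ are unitary), and set W = (a·b⁻¹)*·(c·d⁻¹). Then the dimension of the intersection of the column spaces of Φ and Ψ equals the dimension of the kernel of the L×L matrix Φ*𝓛Ψ, and both equal the multiplicity of 1 as an eigenvalue of the unitary matrix W (i.e. the dimension of the kernel of W − 1). -/

import Mathlib

open Matrix
open scoped ComplexOrder

/-- The fundamental form `𝓛 = diag(1, −1)`. -/
noncomputable def Lform (L : ℕ) : Matrix (Fin L ⊕ Fin L) (Fin L ⊕ Fin L) ℂ :=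
  fromBlocks 1 0 0 (-1)

theorem aux_form {L : ℕ} (a b c d : Matrix (Fin L) (Fin L) ℂ) :
    (fromRows a b)ᴴ * Lform L * fromRows c d = aᴴ * c - bᴴ * d := by
  rw [conjTranspose_fromRows_eq_fromCols_conjTranspose, Lform, fromCols_mul_fromBlocks,
    fromCols_mul_fromRows]
  simp [sub_eq_add_neg]

theorem aux_inj {L : ℕ} (a b : Matrix (Fin L) (Fin L) ℂ)
    (hr : (fromRows a b).rank = L) : Function.Injective (fromRows a b).mulVecLin := by
  rw [← LinearMap.ker_eq_bot]
  have h := LinearMap.finrank_range_add_finrank_ker (fromRows a b).mulVecLin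
  have h2 : Module.finrank ℂ (LinearMap.range (fromRows a b).mulVecLin) = L := hr
  rw [h2] at h
  simp only [Module.finrank_fintype_fun_eq_card, Fintype.card_fin] at h
  exact Submodule.finrank_eq_zero.mp (by omega)

theorem aux_unit {L : ℕ} (a b : Matrix (Fin L) (Fin L) ℂ)
    (hr : (fromRows a b).rank = L) (h : aᴴ * a = bᴴ * b) : IsUnit b := by
  rw [← mulVec_injective_iff_isUnit]
  intro v w hvw
  have hb : b *ᵥ (v - w) = 0 := by rw [mulVec_sub]; exact sub_eq_zero.mpr hvw
  have ha : a *ᵥ (v - w) = 0 := by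
    rw [← conjTranspose_mul_self_mulVec_eq_zero, h, ← mulVec_mulVec, hb, mulVec_zero]
  have h0 : (fromRows a b).mulVecLin (v - w) = (fromRows a b).mulVecLin 0 := by
    rw [map_zero, mulVecLin_apply, fromRows_mulVec, ha, hb]
    ext i; cases i <;> rfl
  exact sub_eq_zero.mp (aux_inj a b hr h0)

theorem aux_ker {L : ℕ} (A B : Matrix (Fin L) (Fin L) ℂ) (h : A.rank = B.rank) :
    Module.finrank ℂ (LinearMap.ker A.mulVecLin) =
      Module.finrank ℂ (LinearMap.ker B.mulVecLin) := by
  have h1 := LinearMap.finrank_range_add_finrank_ker A.mulVecLin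
  have h2 := LinearMap.finrank_range_add_finrank_ker B.mulVecLin
  unfold Matrix.rank at h
  omega

/-- For two `𝓛`-Lagrangian frames `Φ = (a; b)` and `Ψ = (c; d)` with
`W = (a·b⁻¹)*·(c·d⁻¹)`, the dimension of the intersection of the column spaces of `Φ`
and `Ψ` equals the dimension of the kernel of `Φ*𝓛Ψ`, and both equal the multiplicity
of `1` as an eigenvalue of `W`, i.e. the dimension of the kernel of `W − 1`. -/
theorem stmt_18 (L : ℕ) (hL : 1 ≤ L)
    (a b c d : Matrix (Fin L) (Fin L) ℂ)
    (hΦrank : (fromRows a b).rank = L)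
    (hΦ : (fromRows a b)ᴴ * Lform L * fromRows a b = 0)
    (hΨrank : (fromRows c d).rank = L)
    (hΨ : (fromRows c d)ᴴ * Lform L * fromRows c d = 0) :
    Module.finrank ℂ
        ↥(LinearMap.range (fromRows a b).mulVecLin ⊓
            LinearMap.range (fromRows c d).mulVecLin) =
      Module.finrank ℂ
        ↥(LinearMap.ker ((fromRows a b)ᴴ * Lform L * fromRows c d).mulVecLin) ∧
    Module.finrank ℂ
        ↥(LinearMap.ker ((fromRows a b)ᴴ * Lform L * fromRows c d).mulVecLin) =
      Module.finrank ℂ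
        ↥(LinearMap.ker ((a * b⁻¹)ᴴ * (c * d⁻¹) - 1).mulVecLin) := by
  have hab : aᴴ * a = bᴴ * b := by rw [aux_form] at hΦ; exact sub_eq_zero.mp hΦ
  have hcd : cᴴ * c = dᴴ * d := by rw [aux_form] at hΨ; exact sub_eq_zero.mp hΨ
  have hb : IsUnit b := aux_unit a b hΦrank hab
  have hd : IsUnit d := aux_unit c d hΨrank hcd
  have hbd : IsUnit b.det := (isUnit_iff_isUnit_det b).mp hb
  have hdd : IsUnit d.det := (isUnit_iff_isUnit_det d).mp hd
  have hbHd : IsUnit (bᴴ).det := by rw [det_conjTranspose]; exact hbd.star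
  have haHd : IsUnit (aᴴ).det := by
    have h1 : IsUnit (aᴴ * a).det := by
      rw [hab, det_mul]; exact hbHd.mul hbd
    rw [det_mul] at h1
    exact isUnit_of_mul_isUnit_left h1
  constructor
  · have key : LinearMap.range (fromRows a b).mulVecLin ⊓
        LinearMap.range (fromRows c d).mulVecLin =
        Submodule.map (fromRows c d).mulVecLin
          (LinearMap.ker ((fromRows a b)ᴴ * Lform L * fromRows c d).mulVecLin) := by
      ext x
      constructor
      · rintro ⟨⟨u, hu⟩, ⟨v, hv⟩⟩
        refine ⟨v, ?_, hv⟩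
        simp only [mulVecLin_apply] at hu hv
        simp only [SetLike.mem_coe, LinearMap.mem_ker, mulVecLin_apply]
        rw [← mulVec_mulVec, hv, ← hu, mulVec_mulVec, hΦ, zero_mulVec]
      · rintro ⟨v, hv, rfl⟩
        refine ⟨⟨b⁻¹ *ᵥ (d *ᵥ v), ?_⟩, ⟨v, rfl⟩⟩
        simp only [SetLike.mem_coe, LinearMap.mem_ker, mulVecLin_apply] at hv
        rw [aux_form, sub_mulVec, sub_eq_zero] at hv
        have hbu : b *ᵥ (b⁻¹ *ᵥ (d *ᵥ v)) = d *ᵥ v := by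
          rw [mulVec_mulVec, mul_nonsing_inv b hbd, one_mulVec]
        have hau : a *ᵥ (b⁻¹ *ᵥ (d *ᵥ v)) = c *ᵥ v := by
          apply mulVec_injective_iff_isUnit.mpr ((isUnit_iff_isUnit_det aᴴ).mpr haHd)
          show aᴴ *ᵥ (a *ᵥ (b⁻¹ *ᵥ (d *ᵥ v))) = aᴴ *ᵥ (c *ᵥ v)
          rw [mulVec_mulVec (M := aᴴ) (N := a), hab, ← mulVec_mulVec, hbu, mulVec_mulVec,
            mulVec_mulVec, hv]
        rw [mulVecLin_apply, mulVecLin_apply, fromRows_mulVec, fromRows_mulVec, hau, hbu]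
    rw [key]
    exact (LinearEquiv.finrank_eq (Submodule.equivMapOfInjective _
      (aux_inj c d hΨrank) _)).symm
  · apply aux_ker
    have hfac : (fromRows a b)ᴴ * Lform L * fromRows c d =
        bᴴ * ((a * b⁻¹)ᴴ * (c * d⁻¹) - 1) * d := by
      rw [aux_form, mul_sub, sub_mul, mul_one, conjTranspose_mul, conjTranspose_nonsing_inv]
      congr 1
      calc aᴴ * c = (bᴴ * bᴴ⁻¹) * aᴴ * (c * (d⁻¹ * d)) := by
            rw [mul_nonsing_inv _ hbHd, nonsing_inv_mul _ hdd, one_mul, mul_one]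
        _ = _ := by simp only [Matrix.mul_assoc]
    rw [hfac, rank_mul_eq_left_of_isUnit_det _ _ hdd, rank_mul_eq_right_of_isUnit_det _ _ hbHd]
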